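/- Let K be an infinite field and L a field extension of K. If two n×n matrices M, N with entries in K are conjugate over L (i.e., there exists P ∈ GLₙ(L) with PMP⁻¹ = N), then they are conjugate over K (there exists Q ∈ GLₙ(K) with QMQ⁻¹ = N). -/

import Mathlib

/-- Applying a `K`-linear functional entrywise to an intertwiner over `L` of two matrices over `K`
gives an intertwiner over `K`. -/
theorem map_linearMap_intertwines {K L m : Type*} [CommRing K] [CommRing L] [Algebra K L]
    [Fintype m] {M N : Matrix m m K} {P : Matrix m m L}
    (h : P * M.map (algebraMap K L) = N.map (algebraMap K L) * P) (f : L →ₗ[K] K) :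
    P.map f * M = N * P.map f := by
  ext a c
  have hac := congrArg f (congrFun (congrFun h a) c)
  simp only [Matrix.mul_apply, Matrix.map_apply, map_sum, ← Algebra.smul_def, map_smul,
    smul_eq_mul, mul_comm (P _ _)] at hac
  simpa only [Matrix.mul_apply, Matrix.map_apply, mul_comm (f (P a _))] using hac

/-- If a linear combination over an extension of matrices over an infinite field is nonsingular,
then so is some linear combination over the base field. -/
theorem exists_det_sum_smul_ne_zero {K L m ι : Type*} [Field K] [Infinite K] [CommRing L]
    [Algebra K L] [Fintype m] [DecidableEq m] (s : Finset ι) (A : ι → Matrix m m K) (b : ι → L)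
    (h : (∑ i ∈ s, b i • (A i).map (algebraMap K L)).det ≠ 0) :
    ∃ x : ι → K, (∑ i ∈ s, x i • A i).det ≠ 0 := by
  let p : MvPolynomial ι K :=
    (∑ i ∈ s, (MvPolynomial.X i : MvPolynomial ι K) • (A i).map MvPolynomial.C).det
  by_contra! hx
  have hp : p = 0 := by
    refine MvPolynomial.funext fun x => ?_
    rw [map_zero, ← hx x, RingHom.map_det]
    congr 1
    ext a c
    simp [Matrix.sum_apply]
  apply h
  rw [← map_zero (MvPolynomial.aeval (R := K) b), ← hp, AlgHom.map_det]
  congr 1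
  ext a c
  simp [Matrix.sum_apply, MvPolynomial.algHom_C]

/-- Matrices over an infinite field `K` that are conjugate over a field extension `L`
are already conjugate over `K`. -/
theorem stmt_9 (K L : Type*) [Field K] [Infinite K] [Field L] [Algebra K L]
    (n : ℕ) (M N : Matrix (Fin n) (Fin n) K)
    (h : ∃ P : GL (Fin n) L,
      (P : Matrix (Fin n) (Fin n) L) * M.map (algebraMap K L) * ((P⁻¹ : GL (Fin n) L) : Matrix (Fin n) (Fin n) L)
        = N.map (algebraMap K L)) :
    ∃ Q : GL (Fin n) K,
      (Q : Matrix (Fin n) (Fin n) K) * M * ((Q⁻¹ : GL (Fin n) K) : Matrix (Fin n) (Fin n) K) = N := by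
  classical
  obtain ⟨P, hP⟩ := h
  rw [Units.mul_inv_eq_iff_eq_mul] at hP
  let b := Module.Basis.ofVectorSpace K L
  let s := Finset.univ.biUnion fun a => Finset.univ.biUnion fun c => (b.repr (P a c)).support
  let A i : Matrix (Fin n) (Fin n) K := (P : Matrix (Fin n) (Fin n) L).map (b.coord i)
  have hsum : ∑ i ∈ s, b i • (A i).map (algebraMap K L) = P := by
    ext a c
    have hs : (b.repr (P a c)).support ⊆ s := fun i hi =>
      Finset.mem_biUnion.2 ⟨a, Finset.mem_univ a, Finset.mem_biUnion.2 ⟨c, Finset.mem_univ c, hi⟩⟩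
    conv_rhs => rw [← b.linearCombination_repr (P a c), Finsupp.linearCombination_apply,
      Finsupp.sum_of_support_subset _ hs _ (by simp)]
    rw [Matrix.sum_apply]
    refine Finset.sum_congr rfl fun i _ => ?_
    rw [Matrix.smul_apply, smul_eq_mul, Algebra.smul_def, mul_comm]
    rfl
  obtain ⟨x, hx⟩ := exists_det_sum_smul_ne_zero s A b (by
    rw [hsum]
    exact (P : Matrix (Fin n) (Fin n) L).isUnit_iff_isUnit_det.1 P.isUnit |>.ne_zero)
  refine ⟨Matrix.GeneralLinearGroup.mkOfDetNeZero _ hx, ?_⟩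
  rw [Units.mul_inv_eq_iff_eq_mul]
  change (∑ i ∈ s, x i • A i) * M = N * ∑ i ∈ s, x i • A i
  simp only [Finset.sum_mul, Finset.mul_sum, Matrix.smul_mul, Matrix.mul_smul]
  exact Finset.sum_congr rfl fun i _ => by rw [map_linearMap_intertwines hP (b.coord i)]
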